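/- Refuting a threshold: let T_new and T_old be two terminating transition systems sharing an input type X, input set Θ₀, and initial-state maps ι_new, ι_old. Suppose χ_new is an anti-potential function for T_new, φ_old is a potential function for T_old, and t ∈ ℝ satisfies χ_new(ι_new x) − φ_old(ι_old x) > t for some x ∈ Θ₀. Then t is not a threshold for the DiffCost problem: there exist an input x ∈ Θ₀, a run ρ_new from ι_new x in T_new and a run ρ_old from ι_old x in T_old with Cost(ρ_new) − Cost(ρ_old) > t. -/

import Mathlib

/-- A run of the transition system from state `s`. -/
def IsRun {S : Type*} (step : S → S → Prop) (s : S) (ρ : ℕ → S) : Prop :=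
  ρ 0 = s ∧ ∀ n, step (ρ n) (ρ (n + 1))

/-- `s'` is reachable from `s`. -/
def ReachableFrom {S : Type*} (step : S → S → Prop) (s s' : S) : Prop :=
  ∃ ρ n, IsRun step s ρ ∧ ρ n = s'

/-- `s'` is reachable from some initial state in `Init`. -/
def Reachable {S : Type*} (step : S → S → Prop) (Init : Set S) (s' : S) : Prop :=
  ∃ s ∈ Init, ReachableFrom step s s'

/-- The system is terminating: every run from a reachable state visits a terminal state. -/
def Terminating {S : Type*} (step : S → S → Prop) (Term Init : Set S) : Prop :=
  ∀ s, Reachable step Init s → ∀ ρ, IsRun step s ρ → ∃ n, ρ n ∈ Term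

/-- The cost of a run: `c (ρ N) - c (ρ 0)` where `N` is the least index with `ρ N ∈ Term`. -/
noncomputable def RunCost {S : Type*} (Term : Set S) (c : S → ℤ) (ρ : ℕ → S) : ℤ :=
  c (ρ (sInf {n | ρ n ∈ Term})) - c (ρ 0)

/-- Potential function: sufficiency preservation and sufficiency on termination. -/
def IsPF {S : Type*} (step : S → S → Prop) (Term Init : Set S) (c : S → ℤ)
    (φ : S → ℝ) : Prop :=
  (∀ s s', Reachable step Init s → step s s' →
    φ s ≥ φ s' + ((c s' : ℝ) - (c s : ℝ))) ∧
  (∀ s, Reachable step Init s → s ∈ Term → φ s ≥ 0)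

/-- Anti-potential function: insufficiency preservation and insufficiency on termination. -/
def IsAntiPF {S : Type*} (step : S → S → Prop) (Term Init : Set S) (c : S → ℤ)
    (χ : S → ℝ) : Prop :=
  (∀ s s', Reachable step Init s → step s s' →
    χ s ≤ χ s' + ((c s' : ℝ) - (c s : ℝ))) ∧
  (∀ s, Reachable step Init s → s ∈ Term → χ s ≤ 0)

/-- `t` is a threshold for the DiffCost problem. -/
noncomputable def IsThreshold {Sn So X : Type*}
    (stepN : Sn → Sn → Prop) (TermN : Set Sn) (cN : Sn → ℤ)
    (stepO : So → So → Prop) (TermO : Set So) (cO : So → ℤ)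
    (Θ₀ : Set X) (ιN : X → Sn) (ιO : X → So) (t : ℝ) : Prop :=
  ∀ x ∈ Θ₀, ∀ ρN : ℕ → Sn, IsRun stepN (ιN x) ρN →
    ∀ ρO : ℕ → So, IsRun stepO (ιO x) ρO →
      ((RunCost TermN cN ρN : ℝ) - (RunCost TermO cO ρO : ℝ)) ≤ t

/-!
Along a run from an initial state an anti-potential function `χ` makes `χ + c` nondecreasing.
Comparing the start of the run with its first terminal state, where `χ ≤ 0`, gives `χ s ≤ Cost ρ`.
Negating `φ` and `c` turns this into the upper bound `Cost ρ ≤ φ s` for a potential function `φ`,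
so every pair of terminating runs on the input `x` has cost difference at least
`χ (ι_new x) - φ (ι_old x)`.
-/

section Runs

variable {S : Type*} {step : S → S → Prop} {Term Init : Set S} {s : S} {ρ : ℕ → S}

theorem exists_isRun (htotal : ∀ s, ∃ s', step s s') (s : S) : ∃ ρ, IsRun step s ρ := by
  choose next hnext using htotal
  refine ⟨fun n => next^[n] s, rfl, fun n => ?_⟩
  simpa only [Function.iterate_succ_apply'] using hnext (next^[n] s)

theorem IsRun.reachable (hρ : IsRun step s ρ) (hs : s ∈ Init) (n : ℕ) :
    Reachable step Init (ρ n) :=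
  ⟨s, hs, ρ, n, hρ, rfl⟩

theorem Terminating.exists_isRun_mem (hterm : Terminating step Term Init)
    (htotal : ∀ s, ∃ s', step s s') (hs : s ∈ Init) :
    ∃ ρ, IsRun step s ρ ∧ ∃ n, ρ n ∈ Term := by
  obtain ⟨ρ, hρ⟩ := exists_isRun htotal s
  exact ⟨ρ, hρ, hterm s ⟨s, hs, ρ, 0, hρ, hρ.1⟩ ρ hρ⟩

end Runs

section CostBounds

variable {S : Type*} {step : S → S → Prop} {Term Init : Set S} {c : S → ℤ} {χ φ : S → ℝ}
  {s : S} {ρ : ℕ → S}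

theorem IsAntiPF.monotone_add_cost (hχ : IsAntiPF step Term Init c χ) (hs : s ∈ Init)
    (hρ : IsRun step s ρ) : Monotone fun n => χ (ρ n) + c (ρ n) :=
  monotone_nat_of_le_succ fun n => by
    linarith [hχ.1 _ _ (hρ.reachable hs n) (hρ.2 n)]

theorem IsAntiPF.le_runCost (hχ : IsAntiPF step Term Init c χ) (hs : s ∈ Init)
    (hρ : IsRun step s ρ) (hvisit : ∃ n, ρ n ∈ Term) : χ s ≤ RunCost Term c ρ := by
  set N := sInf {n | ρ n ∈ Term}
  have hterminal : χ (ρ N) ≤ 0 := hχ.2 _ (hρ.reachable hs N) (Nat.sInf_mem hvisit)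
  have hmono : χ (ρ 0) + c (ρ 0) ≤ χ (ρ N) + c (ρ N) :=
    hχ.monotone_add_cost hs hρ (Nat.zero_le N)
  calc
    χ s = χ (ρ 0) := by rw [hρ.1]
    _ ≤ c (ρ N) - c (ρ 0) := by linarith
    _ = RunCost Term c ρ := by rw [RunCost, Int.cast_sub]

theorem IsPF.neg (hφ : IsPF step Term Init c φ) : IsAntiPF step Term Init (-c) (-φ) := by
  refine ⟨fun s s' hs hstep => ?_, fun s hs hterminal => neg_nonpos.mpr (hφ.2 s hs hterminal)⟩
  simp only [Pi.neg_apply, Int.cast_neg]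
  linarith [hφ.1 s s' hs hstep]

theorem runCost_neg (Term : Set S) (c : S → ℤ) (ρ : ℕ → S) :
    RunCost Term (-c) ρ = -RunCost Term c ρ := by
  simp only [RunCost, Pi.neg_apply]
  ring

theorem IsPF.runCost_le (hφ : IsPF step Term Init c φ) (hs : s ∈ Init)
    (hρ : IsRun step s ρ) (hvisit : ∃ n, ρ n ∈ Term) : RunCost Term c ρ ≤ φ s := by
  have hneg : -φ s ≤ (RunCost Term (-c) ρ : ℝ) := hφ.neg.le_runCost hs hρ hvisit
  rwa [runCost_neg, Int.cast_neg, neg_le_neg_iff] at hneg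

end CostBounds

theorem refute_threshold_general {Sn So X : Type*}
    {stepN : Sn → Sn → Prop} {TermN : Set Sn} {cN : Sn → ℤ}
    {stepO : So → So → Prop} {TermO : Set So} {cO : So → ℤ}
    {Θ₀ : Set X} {ιN : X → Sn} {ιO : X → So}
    (hrunN : ∀ x ∈ Θ₀, ∃ ρ, IsRun stepN (ιN x) ρ ∧ ∃ n, ρ n ∈ TermN)
    (hrunO : ∀ x ∈ Θ₀, ∃ ρ, IsRun stepO (ιO x) ρ ∧ ∃ n, ρ n ∈ TermO)
    {χN : Sn → ℝ} (hχN : IsAntiPF stepN TermN (ιN '' Θ₀) cN χN)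
    {φO : So → ℝ} (hφO : IsPF stepO TermO (ιO '' Θ₀) cO φO)
    {t : ℝ} (ht : ∃ x ∈ Θ₀, χN (ιN x) - φO (ιO x) > t) :
    ∃ x ∈ Θ₀, ∃ ρN : ℕ → Sn, IsRun stepN (ιN x) ρN ∧
      ∃ ρO : ℕ → So, IsRun stepO (ιO x) ρO ∧
        ((RunCost TermN cN ρN : ℝ) - (RunCost TermO cO ρO : ℝ)) > t := by
  obtain ⟨x, hx, hlt⟩ := ht
  obtain ⟨ρN, hρN, hvisitN⟩ := hrunN x hx
  obtain ⟨ρO, hρO, hvisitO⟩ := hrunO x hx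
  have hlower := hχN.le_runCost (Set.mem_image_of_mem ιN hx) hρN hvisitN
  have hupper := hφO.runCost_le (Set.mem_image_of_mem ιO hx) hρO hvisitO
  exact ⟨x, hx, ρN, hρN, ρO, hρO, hlt.trans_le (sub_le_sub hlower hupper)⟩

/-- refuting a threshold via an anti-PF for the new system and a PF for
the old system. -/
theorem refute_threshold {Sn So X : Type*}
    (stepN : Sn → Sn → Prop) (TermN : Set Sn) (cN : Sn → ℤ)
    (stepO : So → So → Prop) (TermO : Set So) (cO : So → ℤ)
    (Θ₀ : Set X) (ιN : X → Sn) (ιO : X → So)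
    (htotalN : ∀ s : Sn, ∃ s', stepN s s')
    (htotalO : ∀ s : So, ∃ s', stepO s s')
    (hTermN : ∀ s ∈ TermN, ∀ s', stepN s s' → s' = s)
    (hTermO : ∀ s ∈ TermO, ∀ s', stepO s s' → s' = s)
    (hterminatingN : Terminating stepN TermN (ιN '' Θ₀))
    (hterminatingO : Terminating stepO TermO (ιO '' Θ₀))
    (χN : Sn → ℝ) (hχN : IsAntiPF stepN TermN (ιN '' Θ₀) cN χN)
    (φO : So → ℝ) (hφO : IsPF stepO TermO (ιO '' Θ₀) cO φO)
    (t : ℝ) (ht : ∃ x ∈ Θ₀, χN (ιN x) - φO (ιO x) > t) :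
    ∃ x ∈ Θ₀, ∃ ρN : ℕ → Sn, IsRun stepN (ιN x) ρN ∧
      ∃ ρO : ℕ → So, IsRun stepO (ιO x) ρO ∧
        ((RunCost TermN cN ρN : ℝ) - (RunCost TermO cO ρO : ℝ)) > t := by
  exact refute_threshold_general
    (fun _ hx => hterminatingN.exists_isRun_mem htotalN (Set.mem_image_of_mem ιN hx))
    (fun _ hx => hterminatingO.exists_isRun_mem htotalO (Set.mem_image_of_mem ιO hx)) hχN hφO ht
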